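/- Let k, c, d be natural numbers and let χ₁, …, χ_d be nonzero elements of ℤ^k. In the polynomial ring R = ℂ[y₁,…,y_c, x₁,…,x_d, z₁,…,z_d], assign each variable y_j the weight 0 ∈ ℤ^k, each x_i the weight χ_i, and each z_i the weight −χ_i, and define the weight of a monomial to be the sum, with multiplicity, of the weights of its variables. Let I ⊆ R be the ideal generated by all monomials of weight 0 and of positive total degree. Then the Krull dimension of the quotient ring R/I equals d. -/

import Mathlib

open MvPolynomial

noncomputable section

/-- The variables of the polynomial ring `R = ℂ[y₁,…,y_c, x₁,…,x_d, z₁,…,z_d]`: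
`Sum.inl j` is `y_j`, `Sum.inr (Sum.inl i)` is `x_i`, `Sum.inr (Sum.inr i)` is `z_i`. -/
abbrev SymVar (c d : ℕ) : Type := Fin c ⊕ (Fin d ⊕ Fin d)

/-- The `ℤ^k`-weight of each variable: `y_j` has weight `0`, `x_i` has weight `χ i`,
`z_i` has weight `-χ i`. -/
def varWeight (k c d : ℕ) (χ : Fin d → Fin k → ℤ) : SymVar c d → Fin k → ℤ :=
  Sum.elim (fun _ => 0) (Sum.elim (fun i => χ i) (fun i => -χ i))

/-- The weight of a monomial with exponent vector `e`: the sum, with multiplicity, of the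
weights of its variables. -/
def monWeight (k c d : ℕ) (χ : Fin d → Fin k → ℤ) (e : SymVar c d →₀ ℕ) : Fin k → ℤ :=
  e.sum fun v n => n • varWeight k c d χ v

/-! Every `x_i z_i` and every `y_j` has weight zero, so a prime containing the ideal contains all
`y_j` and one of `x_i`, `z_i` for each `i`: the null cone lies in a union of `d`-dimensional
coordinate subspaces. Conversely, a linear order on the weight group modulo torsion makes exactly
one of `χ_i`, `-χ_i` positive for each `i`. Every nonconstant monomial in the corresponding `d`
variables has positive weight, so the coordinate subspace they span lies in the null cone. -/

section KrullDimension

variable {R : Type*} [CommRing R]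

lemma ringKrullDim_le_of_forall_isPrime {n : WithBot ℕ∞}
    (h : ∀ P : Ideal R, P.IsPrime → ringKrullDim (R ⧸ P) ≤ n) : ringKrullDim R ≤ n := by
  rw [ringKrullDim, Order.krullDim_eq_iSup_coheight]
  refine iSup_le fun p => ?_
  calc (Order.coheight p : WithBot ℕ∞)
      = Order.krullDim (Set.Ici p) := Order.coheight_eq_krullDim_Ici p
    _ = ringKrullDim (R ⧸ p.asIdeal) := (ringKrullDim_quotient p.asIdeal).symm
    _ ≤ n := h p.asIdeal p.isPrime

lemma ringKrullDim_quotient_le_of_forall_isPrime {I : Ideal R} {n : WithBot ℕ∞}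
    (h : ∀ P : Ideal R, P.IsPrime → I ≤ P → ringKrullDim (R ⧸ P) ≤ n) :
    ringKrullDim (R ⧸ I) ≤ n := by
  refine ringKrullDim_le_of_forall_isPrime fun P hP => ?_
  have le_comap : I ≤ P.comap (Ideal.Quotient.mk I) := by
    rw [← Ideal.map_le_iff_le_comap, Ideal.map_quotient_self]
    exact bot_le
  exact (ringKrullDim_le_of_surjective (Ideal.quotientMap P (Ideal.Quotient.mk I) le_rfl)
    (Ideal.quotientMap_surjective Ideal.Quotient.mk_surjective)).trans
    (h _ (hP.comap _) le_comap)

end KrullDimension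

section CoordinateSubspace

variable {A σ ι : Type*} [CommRing A] {f : σ → ι}

lemma quotient_mk_comp_rename_surjective {I : Ideal (MvPolynomial ι A)}
    (hf : ∀ v ∉ Set.range f, X v ∈ I) :
    Function.Surjective ((Ideal.Quotient.mkₐ A I).comp (rename f)) := by
  rw [← AlgHom.range_eq_top, eq_top_iff,
    ← (AlgHom.range_eq_top _).2 (Ideal.Quotient.mkₐ_surjective A I), ← Algebra.map_top,
    ← adjoin_range_X, AlgHom.map_adjoin, Algebra.adjoin_le_iff]
  rintro _ ⟨_, ⟨v, rfl⟩, rfl⟩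
  by_cases hv : v ∈ Set.range f
  · obtain ⟨i, rfl⟩ := hv
    exact ⟨X i, by simp⟩
  · have mk_X_eq_zero : Ideal.Quotient.mkₐ A I (X v) = 0 :=
      Ideal.Quotient.eq_zero_iff_mem.2 (hf v hv)
    exact mk_X_eq_zero ▸ zero_mem _

lemma ringKrullDim_quotient_le_of_X_mem {I : Ideal (MvPolynomial ι A)}
    (hf : ∀ v ∉ Set.range f, X v ∈ I) :
    ringKrullDim (MvPolynomial ι A ⧸ I) ≤ ringKrullDim (MvPolynomial σ A) :=
  ringKrullDim_le_of_surjective _ (quotient_mk_comp_rename_surjective hf)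

lemma ringKrullDim_le_quotient_of_le_ker_killCompl {I : Ideal (MvPolynomial ι A)}
    (hf : Function.Injective f) (hI : I ≤ RingHom.ker (killCompl (R := A) hf)) :
    ringKrullDim (MvPolynomial σ A) ≤ ringKrullDim (MvPolynomial ι A ⧸ I) :=
  ringKrullDim_le_of_surjective (Ideal.Quotient.lift I (killCompl hf).toRingHom hI)
    (Ideal.Quotient.lift_surjective_of_surjective _ _
      (Function.LeftInverse.surjective (killCompl_rename_app hf)))

end CoordinateSubspace

lemma exists_linearOrder_isOrderedAddMonoid_of_module_rat (V : Type*) [AddCommGroup V]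
    [Module ℚ V] : ∃ _ : LinearOrder V, IsOrderedAddMonoid V := by
  let b := Module.Basis.ofVectorSpace ℚ V
  obtain ⟨_, -⟩ := exists_wellFoundedLT (Module.Basis.ofVectorSpaceIndex ℚ V)
  let coords : V → Lex (Module.Basis.ofVectorSpaceIndex ℚ V →₀ ℚ) := fun v => toLex (b.repr v)
  have coords_injective : Function.Injective coords := toLex.injective.comp b.repr.injective
  let _ : LinearOrder V := LinearOrder.lift' coords coords_injective
  exact ⟨inferInstance, Function.Injective.isOrderedAddMonoid coords
    (fun v w => congrArg toLex (map_add b.repr v w)) Iff.rfl⟩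

lemma divisibleHull_coe_eq_zero_iff {M : Type*} [AddCommMonoid M] {m : M} :
    (m : DivisibleHull M) = 0 ↔ IsOfFinAddOrder m := by
  rw [← DivisibleHull.mk_zero 1, DivisibleHull.mk_eq_mk, isOfFinAddOrder_iff_nsmul_eq_zero]
  simp only [PNat.val_ofNat, one_smul, smul_zero]
  exact ⟨fun ⟨n, hn⟩ => ⟨n, n.pos, hn⟩, fun ⟨n, hpos, hn⟩ => ⟨⟨n, hpos⟩, hn⟩⟩

section NullconeIdeal

variable (A : Type*) {ι M : Type*} [CommRing A] [AddCommMonoid M]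

/-- The ideal generated by the nonconstant monomials of weight zero. When `M` is the character group
of a diagonalizable group acting on affine space with weights `w`, its zero locus is the null
cone. -/
def nullconeIdeal (w : ι → M) : Ideal (MvPolynomial ι A) :=
  Ideal.span {p | ∃ e : ι →₀ ℕ, p = monomial e 1 ∧ Finsupp.weight w e = 0 ∧ e ≠ 0}

variable {A} {w : ι → M}

lemma monomial_mem_nullconeIdeal {e : ι →₀ ℕ} (he : Finsupp.weight w e = 0) (he₀ : e ≠ 0) :
    monomial e 1 ∈ nullconeIdeal A w :=
  Ideal.subset_span ⟨e, rfl, he, he₀⟩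

lemma X_mem_nullconeIdeal {v : ι} (hv : w v = 0) : X v ∈ nullconeIdeal A w :=
  monomial_mem_nullconeIdeal (by simp [Finsupp.weight_single, hv]) (by simp)

lemma X_mul_X_mem_nullconeIdeal {u v : ι} (huv : w u + w v = 0) :
    X u * X v ∈ nullconeIdeal A w := by
  rw [X, X, monomial_mul, one_mul]
  exact monomial_mem_nullconeIdeal (by simp [Finsupp.weight_single, huv]) (by simp)

variable {Γ : Type*} [AddCommMonoid Γ] [PartialOrder Γ] [IsOrderedCancelAddMonoid Γ]

lemma map_weight_pos {φ : M →+ Γ} {e : ι →₀ ℕ} (he : e ≠ 0)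
    (hpos : ∀ v ∈ e.support, 0 < φ (w v)) : 0 < φ (Finsupp.weight w e) := by
  rw [Finsupp.weight_apply, map_finsuppSum]
  refine Finset.sum_pos (fun v hv => ?_) (Finsupp.support_nonempty_iff.2 he)
  dsimp only
  rw [map_nsmul]
  exact nsmul_pos (hpos v hv) (Finsupp.mem_support_iff.1 hv)

lemma nullconeIdeal_le_ker_killCompl {σ : Type*} {f : σ → ι} (hf : Function.Injective f)
    (φ : M →+ Γ) (hpos : ∀ i, 0 < φ (w (f i))) :
    nullconeIdeal A w ≤ RingHom.ker (killCompl (R := A) hf) := by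
  refine Ideal.span_le.2 ?_
  rintro _ ⟨e, rfl, hweight, he⟩
  refine killCompl_monomial_eq_zero_of_not_subset hf 1 fun hsupport => ?_
  have weight_pos : 0 < φ (Finsupp.weight w e) := map_weight_pos he fun v hv => by
    obtain ⟨i, rfl⟩ := hsupport hv
    exact hpos i
  exact weight_pos.ne' (by rw [hweight, map_zero])

end NullconeIdeal

section SymmetricWeight

variable {A τ σ M : Type*} [CommRing A] [AddCommGroup M]

/-- The weights of a symmetric action: `y_j = inl j` has weight `0`, while `x_i = inr (inl i)` and
`z_i = inr (inr i)` have opposite weights `χ i` and `-χ i`. -/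
def symmetricWeight (χ : σ → M) : τ ⊕ (σ ⊕ σ) → M :=
  Sum.elim (fun _ => 0) (Sum.elim χ (fun i => -χ i))

open scoped Classical in
/-- The choice of `x_i` for `i ∈ s` and of `z_i` for `i ∉ s`. The null cone lies in the union of
the coordinate subspaces on which these are the coordinates, over all `s`. -/
def halfCoordinates (s : Set σ) (i : σ) : τ ⊕ (σ ⊕ σ) :=
  if i ∈ s then Sum.inr (Sum.inl i) else Sum.inr (Sum.inr i)

lemma halfCoordinates_of_mem {s : Set σ} {i : σ} (hi : i ∈ s) :
    halfCoordinates (τ := τ) s i = Sum.inr (Sum.inl i) :=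
  if_pos hi

lemma halfCoordinates_of_notMem {s : Set σ} {i : σ} (hi : i ∉ s) :
    halfCoordinates (τ := τ) s i = Sum.inr (Sum.inr i) :=
  if_neg hi

lemma halfCoordinates_injective (s : Set σ) :
    Function.Injective (halfCoordinates (τ := τ) s) := by
  intro i j hij
  unfold halfCoordinates at hij
  split_ifs at hij <;> simp_all

lemma map_symmetricWeight_halfCoordinates_pos {Γ : Type*} [AddCommGroup Γ] [LinearOrder Γ]
    [IsOrderedAddMonoid Γ] {φ : M →+ Γ} {χ : σ → M} {i : σ} (hi : φ (χ i) ≠ 0) :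
    0 < φ (symmetricWeight χ (halfCoordinates (τ := τ) {j | 0 < φ (χ j)} i)) := by
  by_cases hpos : i ∈ {j | 0 < φ (χ j)}
  · rw [halfCoordinates_of_mem hpos]
    exact hpos
  · rw [halfCoordinates_of_notMem hpos]
    change 0 < φ (-χ i)
    rw [map_neg, neg_pos]
    exact lt_of_le_of_ne (not_lt.1 hpos) hi

variable {χ : σ → M}

lemma X_mem_of_notMem_range_halfCoordinates {P : Ideal (MvPolynomial (τ ⊕ (σ ⊕ σ)) A)}
    [hP : P.IsPrime] (hχP : nullconeIdeal A (symmetricWeight χ) ≤ P) {v : τ ⊕ (σ ⊕ σ)}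
    (hv : v ∉ Set.range (halfCoordinates {i | X (Sum.inr (Sum.inl i)) ∉ P})) : X v ∈ P := by
  rcases v with j | i | i
  · exact hχP (X_mem_nullconeIdeal rfl)
  · by_contra hx
    exact hv ⟨i, halfCoordinates_of_mem hx⟩
  · have xz_mem : X (Sum.inr (Sum.inl i)) * X (Sum.inr (Sum.inr i)) ∈ P :=
      hχP (X_mul_X_mem_nullconeIdeal (add_neg_cancel (χ i)))
    refine (hP.mem_or_mem xz_mem).resolve_left fun hx => ?_
    exact hv ⟨i, halfCoordinates_of_notMem (not_not.2 hx)⟩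

variable (A τ χ) in
lemma ringKrullDim_quotient_nullconeIdeal_symmetricWeight_le :
    ringKrullDim (MvPolynomial (τ ⊕ (σ ⊕ σ)) A ⧸ nullconeIdeal A (symmetricWeight χ)) ≤
      ringKrullDim (MvPolynomial σ A) :=
  ringKrullDim_quotient_le_of_forall_isPrime fun _ _ hχP =>
    ringKrullDim_quotient_le_of_X_mem fun _ => X_mem_of_notMem_range_halfCoordinates hχP

variable (A τ) in
lemma le_ringKrullDim_quotient_nullconeIdeal_symmetricWeight
    (hχ : ∀ i, ¬ IsOfFinAddOrder (χ i)) :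
    ringKrullDim (MvPolynomial σ A) ≤
      ringKrullDim (MvPolynomial (τ ⊕ (σ ⊕ σ)) A ⧸ nullconeIdeal A (symmetricWeight χ)) := by
  obtain ⟨_, _⟩ := exists_linearOrder_isOrderedAddMonoid_of_module_rat (DivisibleHull M)
  let φ : M →+ DivisibleHull M := DivisibleHull.coeAddMonoidHom M
  have map_χ_ne_zero (i : σ) : φ (χ i) ≠ 0 := fun h =>
    hχ i (divisibleHull_coe_eq_zero_iff.1 h)
  exact ringKrullDim_le_quotient_of_le_ker_killCompl
    (halfCoordinates_injective {i | 0 < φ (χ i)})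
    (nullconeIdeal_le_ker_killCompl _ φ fun i =>
      map_symmetricWeight_halfCoordinates_pos (map_χ_ne_zero i))

end SymmetricWeight

theorem krullDim_quotient_nullcone_ideal_general (A τ : Type*) {σ M : Type*} [CommRing A]
    [AddCommGroup M] (χ : σ → M) (hχ : ∀ i, ¬ IsOfFinAddOrder (χ i)) :
    ringKrullDim (MvPolynomial (τ ⊕ (σ ⊕ σ)) A ⧸ nullconeIdeal A (symmetricWeight χ)) =
      ringKrullDim (MvPolynomial σ A) :=
  le_antisymm (ringKrullDim_quotient_nullconeIdeal_symmetricWeight_le A τ χ)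
    (le_ringKrullDim_quotient_nullconeIdeal_symmetricWeight A τ hχ)

/-- If `χ₁, …, χ_d ∈ ℤ^k` are nonzero and `I` is the ideal of
`R = ℂ[y₁,…,y_c, x₁,…,x_d, z₁,…,z_d]` generated by all monomials of weight `0` and of
positive total degree (where `y_j` has weight `0`, `x_i` has weight `χ_i` and `z_i` has
weight `-χ_i`), then the Krull dimension of `R ⧸ I` equals `d`. -/
theorem krullDim_quotient_nullcone_ideal (k c d : ℕ) (χ : Fin d → Fin k → ℤ)
    (hχ : ∀ i, χ i ≠ 0) :
    ringKrullDim (MvPolynomial (SymVar c d) ℂ ⧸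
      Ideal.span {p : MvPolynomial (SymVar c d) ℂ | ∃ e : SymVar c d →₀ ℕ,
        p = monomial e 1 ∧ monWeight k c d χ e = 0 ∧ e ≠ 0}) = (d : WithBot ℕ∞) := by
  refine (krullDim_quotient_nullcone_ideal_general ℂ (Fin c) χ fun i =>
    not_isOfFinAddOrder_of_isAddTorsionFree (hχ i)).trans ?_
  simp
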